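/- For every coalition C ⊆ AG and all formulas φ, ψ ∈ Φ, the formula ⟨C⟩(φ∨ψ) → (⟨C⟩φ ∨ ⟨AG⟩ψ) holds at every state of every deterministic general concurrent game model. -/

import Mathlib

/-!
Suppose a joint action `σ` of `C` forces `φ ∨ ψ`. If every outcome of `σ` satisfies `φ`, then `σ`
witnesses `⟨C⟩φ`. Otherwise some outcome `t` of `σ` satisfies `ψ`; it is an outcome of an action
profile `τ` extending `σ`, and by determinism `t` is the only outcome of `τ`, so `τ` witnesses
`⟨AG⟩ψ`.
-/

namespace CL

/-- The language Φ of coalition logic over a set of agents, with atomic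
propositions drawn from ℕ (a countable set). -/
inductive Formula (Agent : Type) : Type
  | top : Formula Agent
  | atom : ℕ → Formula Agent
  | neg : Formula Agent → Formula Agent
  | and : Formula Agent → Formula Agent → Formula Agent
  | coal : Set Agent → Formula Agent → Formula Agent

namespace Formula

variable {Agent : Type}

def bot : Formula Agent := neg top

def or (φ ψ : Formula Agent) : Formula Agent := neg (and (neg φ) (neg ψ))

def imp (φ ψ : Formula Agent) : Formula Agent := or (neg φ) ψ

def iff (φ ψ : Formula Agent) : Formula Agent := and (imp φ ψ) (imp ψ φ)

end Formula

/-- The three frame properties: seriality, independence of agents, determinism.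
`ES` is represented by `Set P3`, the eight subsets of {S, I, D}. -/
inductive P3 : Type
  | S | I | D
deriving DecidableEq
section
open Classical

/-- Merge of two joint actions of disjoint coalitions. -/
noncomputable def jaUnion {Agent Act : Type} {C D : Set Agent}
    (σC : C → Act) (σD : D → Act) : ↥(C ∪ D) → Act :=
  fun a =>
    if h : a.1 ∈ C then σC ⟨a.1, h⟩
    else σD ⟨a.1, ((Set.mem_union _ _ _).mp a.2).resolve_left h⟩

end

/-- A general concurrent game frame: a nonempty set of states, a nonempty set
of actions, and an outcome function for the grand coalition.  Joint actions of
a coalition C are functions C → Act; action profiles are functions Agent → Act. -/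
structure Frame (Agent : Type) where
  State : Type
  state_nonempty : Nonempty State
  Act : Type
  act_nonempty : Nonempty Act
  out : State → (Agent → Act) → Set State

namespace Frame

variable {Agent : Type} (F : Frame Agent)

/-- Outcome function for a coalition C. -/
def outC (C : Set Agent) (s : F.State) (σ : C → F.Act) : Set F.State :=
  ⋃ (τ : Agent → F.Act) (_ : ∀ a : C, τ a.1 = σ a), F.out s τ

/-- Availability function: the available joint actions of C at s. -/
def aja (C : Set Agent) (s : F.State) : Set (C → F.Act) :=
  {σ | (F.outC C s σ).Nonempty}

def Serial : Prop := ∀ (s : F.State) (C : Set Agent), (F.aja C s).Nonempty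

def Independent : Prop :=
  ∀ (s : F.State) (C D : Set Agent), C ∩ D = ∅ →
    ∀ σC ∈ F.aja C s, ∀ σD ∈ F.aja D s, jaUnion σC σD ∈ F.aja (C ∪ D) s

def Deterministic : Prop :=
  ∀ s : F.State, ∀ σ ∈ F.aja Set.univ s, ∃ t : F.State, F.outC Set.univ s σ = {t}

end Frame

/-- A general concurrent game model: a frame together with a labeling function
(atomic propositions are drawn from the countable set ℕ). -/
structure Model (Agent : Type) extends Frame Agent where
  lab : State → Set ℕ

namespace Model

variable {Agent : Type} (M : Model Agent)

/-- Satisfaction: M, s ⊨ φ. -/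
def sat : Formula Agent → M.State → Prop
  | .top, _ => True
  | .atom n, s => n ∈ M.lab s
  | .neg φ, s => ¬ sat φ s
  | .and φ ψ, s => sat φ s ∧ sat ψ s
  | .coal C φ, s => ∃ σ ∈ M.toFrame.aja C s, ∀ t ∈ M.toFrame.outC C s σ, sat φ t

/-- M is an X-model (for X ∈ ES). -/
def IsX (X : Set P3) : Prop :=
  (P3.S ∈ X → M.toFrame.Serial) ∧ (P3.I ∈ X → M.toFrame.Independent) ∧
    (P3.D ∈ X → M.toFrame.Deterministic)

end Model

/-- φ is X-valid: φ holds at every pointed X-model. -/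
def XValid {Agent : Type} (X : Set P3) (φ : Formula Agent) : Prop :=
  ∀ M : Model Agent, M.IsX X → ∀ s : M.State, M.sat φ s

/-- φ is X-satisfiable: φ holds at some pointed X-model. -/
def XSat {Agent : Type} (X : Set P3) (φ : Formula Agent) : Prop :=
  ∃ M : Model Agent, M.IsX X ∧ ∃ s : M.State, M.sat φ s

/-- φ ⊨_XL ψ : ψ holds at every pointed X-model at which φ holds. -/
def XConseq {Agent : Type} (X : Set P3) (φ ψ : Formula Agent) : Prop :=
  ∀ M : Model Agent, M.IsX X → ∀ s : M.State, M.sat φ s → M.sat ψ s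

namespace Frame

variable {Agent : Type} {F : Frame Agent} {C : Set Agent} {s t : F.State}

theorem mem_outC {σ : C → F.Act} :
    t ∈ F.outC C s σ ↔ ∃ τ, C.domRestrict τ = σ ∧ t ∈ F.out s τ := by
  simp only [outC, Set.mem_iUnion, exists_prop, funext_iff, Set.domRestrict_apply]

theorem outC_univ_domRestrict (s : F.State) (τ : Agent → F.Act) :
    F.outC Set.univ s (Set.univ.domRestrict τ) = F.out s τ := by
  have domRestrict_injective :
      Function.Injective (Set.univ.domRestrict : (Agent → F.Act) → Set.univ → F.Act) :=
    fun _ _ h => funext fun a => congrFun h ⟨a, Set.mem_univ a⟩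
  ext t
  simp only [mem_outC, domRestrict_injective.eq_iff, exists_eq_left]

theorem Deterministic.subsingleton_out (hF : F.Deterministic) (s : F.State)
    (τ : Agent → F.Act) : (F.out s τ).Subsingleton := by
  rw [← outC_univ_domRestrict]
  intro t ht
  obtain ⟨u, hu⟩ := hF s _ ⟨t, ht⟩
  exact (hu ▸ Set.subsingleton_singleton) ht

end Frame

namespace Model

variable {Agent : Type} {M : Model Agent} {C : Set Agent} {φ ψ : Formula Agent} {s t : M.State}

theorem sat_or : M.sat (φ.or ψ) s ↔ M.sat φ s ∨ M.sat ψ s := by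
  simp only [Formula.or, sat, or_iff_not_and_not]

theorem sat_imp : M.sat (φ.imp ψ) s ↔ (M.sat φ s → M.sat ψ s) := by
  simp only [Formula.imp, sat_or, sat, imp_iff_not_or]

theorem sat_coal_univ_of_forall_out {τ : Agent → M.Act} (hne : (M.out s τ).Nonempty)
    (hτ : ∀ t ∈ M.out s τ, M.sat φ t) : M.sat (.coal Set.univ φ) s := by
  rw [← Frame.outC_univ_domRestrict] at hne hτ
  exact ⟨Set.univ.domRestrict τ, hne, hτ⟩

theorem sat_coal_univ_of_mem_outC (hs : ∀ τ, (M.out s τ).Subsingleton) {σ : C → M.Act}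
    (ht : t ∈ M.outC C s σ) (hφ : M.sat φ t) : M.sat (.coal Set.univ φ) s := by
  obtain ⟨τ, -, htτ⟩ := Frame.mem_outC.mp ht
  exact sat_coal_univ_of_forall_out ⟨t, htτ⟩ fun u hu => hs τ htτ hu ▸ hφ

end Model

theorem det_valid_on_deterministic_general {Agent : Type} (M : Model Agent) (s : M.State)
    (hs : ∀ τ, (M.out s τ).Subsingleton) (C : Set Agent) (φ ψ : Formula Agent) :
    M.sat ((Formula.coal C (φ.or ψ)).imp
      ((Formula.coal C φ).or (Formula.coal Set.univ ψ))) s := by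
  rw [Model.sat_imp, Model.sat_or]
  rintro ⟨σ, hσ, hσφψ⟩
  by_cases hσφ : ∀ t ∈ M.outC C s σ, M.sat φ t
  · exact Or.inl ⟨σ, hσ, hσφ⟩
  · push Not at hσφ
    obtain ⟨t, ht, htφ⟩ := hσφ
    have htψ : M.sat ψ t := (Model.sat_or.mp (hσφψ t ht)).resolve_left htφ
    exact Or.inr (Model.sat_coal_univ_of_mem_outC hs ht htψ)

/-- A-Det is valid on deterministic models: ⟨C⟩(φ∨ψ) → (⟨C⟩φ ∨ ⟨AG⟩ψ) holds at
every state of every deterministic general concurrent game model. -/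
theorem det_valid_on_deterministic {Agent : Type} [Fintype Agent]
    (M : Model Agent) (hM : M.toFrame.Deterministic) (C : Set Agent)
    (φ ψ : Formula Agent) (s : M.State) :
    M.sat ((Formula.coal C (φ.or ψ)).imp
      ((Formula.coal C φ).or (Formula.coal Set.univ ψ))) s :=
  det_valid_on_deterministic_general M s (hM.subsingleton_out s) C φ ψ

end CL
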